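/- arXiv:2010.06236 — 2 statements merged into one kernel-verified Lean document; each statement's English description precedes it below -/
import Mathlib

section
/- Let the gain L ∈ ℝ^{m×n} be admissible, let P be the solution of the stochastic Lyapunov equation P = 𝒯_L^*(P) + Q + Lᵀ R L, let Σ_0 be any symmetric positive semidefinite n×n matrix, and let Σ_{k+1} = 𝒯_L(Σ_k) + D be the closed-loop covariance recursion. Then the average expected cost equals tr(P D); that is, lim_{N→∞} (1/N) Σ_{k=0}^{N−1} tr((Q + Lᵀ R L) Σ_k) = tr(P D). -/
open Matrix Filter Topology

/-- The sandwich map `X ↦ M * X * Mᵀ` as a linear endomorphism of `n × n` real matrices. -/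
noncomputable def sandwich {n : ℕ} (M : Matrix (Fin n) (Fin n) ℝ) :
    Module.End ℝ (Matrix (Fin n) (Fin n) ℝ) :=
  (LinearMap.mulLeft ℝ M).comp (LinearMap.mulRight ℝ Mᵀ)

/-- The closed-loop covariance operator
`𝒯_L(X) = (A+BL) X (A+BL)ᵀ + Σᵢ ᾱᵢ Aᵢ X Aᵢᵀ + Σⱼ β̄ⱼ (BⱼL) X (BⱼL)ᵀ`. -/
noncomputable def calT {n m p q : ℕ}
    (A : Matrix (Fin n) (Fin n) ℝ) (A' : Fin p → Matrix (Fin n) (Fin n) ℝ)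
    (B : Matrix (Fin n) (Fin m) ℝ) (B' : Fin q → Matrix (Fin n) (Fin m) ℝ)
    (al : Fin p → ℝ) (be : Fin q → ℝ) (L : Matrix (Fin m) (Fin n) ℝ) :
    Module.End ℝ (Matrix (Fin n) (Fin n) ℝ) :=
  sandwich (A + B * L) + ∑ i, al i • sandwich (A' i) + ∑ j, be j • sandwich (B' j * L)

/-- The (trace-)adjoint operator
`𝒯_L^*(P) = (A+BL)ᵀ P (A+BL) + Σᵢ ᾱᵢ Aᵢᵀ P Aᵢ + Σⱼ β̄ⱼ Lᵀ Bⱼᵀ P Bⱼ L`. -/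
noncomputable def calTstar {n m p q : ℕ}
    (A : Matrix (Fin n) (Fin n) ℝ) (A' : Fin p → Matrix (Fin n) (Fin n) ℝ)
    (B : Matrix (Fin n) (Fin m) ℝ) (B' : Fin q → Matrix (Fin n) (Fin m) ℝ)
    (al : Fin p → ℝ) (be : Fin q → ℝ) (L : Matrix (Fin m) (Fin n) ℝ) :
    Module.End ℝ (Matrix (Fin n) (Fin n) ℝ) :=
  sandwich (A + B * L)ᵀ + ∑ i, al i • sandwich (A' i)ᵀ + ∑ j, be j • sandwich (B' j * L)ᵀ

/-- A gain `L` is admissible if the spectral radius of `𝒯_L`, as a linear endomorphism of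
the space of `n × n` real matrices, is strictly less than `1`. -/
noncomputable def Admissible {n m p q : ℕ}
    (A : Matrix (Fin n) (Fin n) ℝ) (A' : Fin p → Matrix (Fin n) (Fin n) ℝ)
    (B : Matrix (Fin n) (Fin m) ℝ) (B' : Fin q → Matrix (Fin n) (Fin m) ℝ)
    (al : Fin p → ℝ) (be : Fin q → ℝ) (L : Matrix (Fin m) (Fin n) ℝ) : Prop :=
  spectralRadius ℝ (calT A A' B B' al be L) < 1

/-! Set `𝒯 = 𝒯_L` and order matrices by their quadratic forms. For `t ∈ [0, 1]` the operator
`1 - t𝒯` is invertible, so `X_t = (1 - t𝒯)⁻¹ I` is a continuous curve starting at `X_0 = I`.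
Whenever `X_t` lies in the closed cone of nonnegative forms, `X_t = t𝒯(X_t) + I` lies in its
interior, so by connectedness `X_1` does: thus some `X` with positive definite form satisfies
`𝒯(X) = X - I ≤ r X` for an `r < 1`.

Every matrix `Z` is dominated by a multiple of `X`, in the sense that
`|x·Zy| ≤ c (x·Xx + y·Xy)`. As `𝒯` preserves domination, `𝒯ᵏ(Z)` is dominated by `c rᵏ X`, hence
`𝒯ᵏ → 0`. So `Σ_k` converges to the solution `S` of `S = 𝒯(S) + D`, and by duality the one-step
cost converges to `tr((P - 𝒯*(P)) S) = tr(P (S - 𝒯(S))) = tr(P D)`; the averages have the same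
limit. -/

section BanachAlgebra

variable {𝕜 A : Type*} [NormedField 𝕜]

theorem isUnit_one_sub_smul_of_spectralRadius_lt_one [Ring A] [Algebra 𝕜 A] {a : A} {z : 𝕜}
    (ha : spectralRadius 𝕜 a < 1) (hz : ‖z‖ ≤ 1) : IsUnit (1 - z • a) := by
  rcases eq_or_ne z 0 with rfl | hz0
  · simp
  have hinv : 1 ≤ ‖z⁻¹‖₊ := by
    rw [← NNReal.coe_le_coe, coe_nnnorm, norm_inv, NNReal.coe_one]
    exact (one_le_inv₀ (norm_pos_iff.2 hz0)).2 hz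
  have hmem : z⁻¹ ∈ resolventSet 𝕜 a :=
    spectrum.mem_resolventSet_of_spectralRadius_lt (ha.trans_le (by exact_mod_cast hinv))
  rw [spectrum.mem_resolventSet_iff, Algebra.algebraMap_eq_smul_one] at hmem
  simpa [Units.smul_def] using
    (IsUnit.smul_sub_iff_sub_inv_smul (r := (Units.mk0 z hz0)⁻¹) (a := a)).1 hmem

theorem continuousOn_inverse_one_sub_smul [NormedRing A] [NormedAlgebra 𝕜 A]
    [HasSummableGeomSeries A] {a : A} (ha : spectralRadius 𝕜 a < 1) :
    ContinuousOn (fun z : 𝕜 => Ring.inverse (1 - z • a)) (Metric.closedBall 0 1) := by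
  intro z hz
  obtain ⟨u, hu⟩ := isUnit_one_sub_smul_of_spectralRadius_lt_one ha (mem_closedBall_zero_iff.1 hz)
  have hline : ContinuousAt (fun z : 𝕜 => 1 - z • a) z := by fun_prop
  exact (ContinuousAt.comp (hu ▸ NormedRing.inverse_continuousAt u) hline).continuousWithinAt

end BanachAlgebra

section ProperCone

section TopologicalVectorSpace

variable {E : Type*} [AddCommGroup E] [Module ℝ E] [TopologicalSpace E] [IsTopologicalAddGroup E]
  {K : ProperCone ℝ E} {x y : E}

theorem add_mem_interior_of_mem_properCone (hx : x ∈ K) (hy : y ∈ interior (K : Set E)) :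
    x + y ∈ interior (K : Set E) := by
  refine interior_mono ?_ (subset_interior_add_right (Set.add_mem_add hx hy))
  rintro _ ⟨a, ha, b, hb, rfl⟩
  exact K.add_mem ha hb

theorem eventually_sub_smul_mem_properCone [ContinuousSMul ℝ E]
    (hx : x ∈ interior (K : Set E)) (y : E) : ∀ᶠ ε : ℝ in 𝓝[>] 0, x - ε • y ∈ K := by
  have hline : Tendsto (fun ε : ℝ => x - ε • y) (𝓝 0) (𝓝 x) := by
    have : Continuous fun ε : ℝ => x - ε • y := by fun_prop
    simpa using this.tendsto 0
  exact nhdsWithin_le_nhds (hline.eventually (mem_interior_iff_mem_nhds.1 hx))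

end TopologicalVectorSpace

section BanachSpace

variable {E : Type*} [NormedAddCommGroup E] [NormedSpace ℝ E] [CompleteSpace E]
  {K : ProperCone ℝ E} {T : E →L[ℝ] E}

theorem exists_mem_interior_map_add_eq (hT : ∀ x ∈ K, T x ∈ K) (hr : spectralRadius ℝ T < 1)
    {d : E} (hd : d ∈ interior (K : Set E)) : ∃ x ∈ interior (K : Set E), T x + d = x := by
  let x : ℝ → E := fun t => Ring.inverse (1 - t • T) d
  have hball : Set.Icc (0 : ℝ) 1 ⊆ Metric.closedBall 0 1 := fun t ht =>
    mem_closedBall_zero_iff.2 (abs_le.2 ⟨by linarith [ht.1], ht.2⟩)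
  have hx : ∀ t ∈ Set.Icc (0 : ℝ) 1, t • T (x t) + d = x t := fun t ht => by
    have hunit := isUnit_one_sub_smul_of_spectralRadius_lt_one hr
      (mem_closedBall_zero_iff.1 (hball ht))
    have := congrArg (fun S : E →L[ℝ] E => S d) (Ring.mul_inverse_cancel _ hunit)
    exact (sub_eq_iff_eq_add'.1 this).symm
  have hcont : ContinuousOn x (Set.Icc 0 1) :=
    ((continuousOn_inverse_one_sub_smul hr).mono hball).clm_apply continuousOn_const
  have himp : ∀ t ∈ Set.Icc (0 : ℝ) 1, x t ∈ K → x t ∈ interior (K : Set E) := fun t ht hxt =>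
    hx t ht ▸ add_mem_interior_of_mem_properCone (K.smul_mem (hT _ hxt) ht.1) hd
  have hcurve : x '' Set.Icc 0 1 ⊆ interior (K : Set E) := by
    refine (isPreconnected_Icc.image x hcont).subset_of_closure_inter_subset isOpen_interior ?_ ?_
    · exact ⟨x 0, Set.mem_image_of_mem x (by simp), by simpa [x] using hd⟩
    · rintro _ ⟨hxK, t, ht, rfl⟩
      exact himp t ht (closure_minimal interior_subset K.isClosed hxK)
  exact ⟨x 1, hcurve (Set.mem_image_of_mem x (by simp)), by simpa using hx 1 (by simp)⟩

theorem exists_mem_interior_smul_sub_map_mem (hT : ∀ x ∈ K, T x ∈ K)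
    (hr : spectralRadius ℝ T < 1) (hK : (interior (K : Set E)).Nonempty) :
    ∃ x ∈ interior (K : Set E), ∃ r ∈ Set.Ico (0 : ℝ) 1, r • x - T x ∈ K := by
  obtain ⟨d, hd⟩ := hK
  obtain ⟨x, hx, hfix⟩ := exists_mem_interior_map_add_eq hT hr hd
  obtain ⟨ε, hε, hε0, hε1⟩ :=
    ((eventually_sub_smul_mem_properCone hd x).and (Ioc_mem_nhdsGT one_pos)).exists
  refine ⟨x, hx, 1 - ε, ⟨by linarith, by linarith⟩, ?_⟩
  have hd_eq : d = x - T x := eq_sub_of_add_eq' hfix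
  have : (1 - ε) • x - T x = d - ε • x := by rw [hd_eq]; module
  rwa [this]

end BanachSpace

end ProperCone

section QuadraticForm

variable {n : Type*} [Fintype n]

/-- The closed cone of square real matrices whose quadratic form is nonnegative. Unlike for
`Matrix.PosSemidef`, no symmetry is imposed, so the cone has nonempty interior in the space of all
matrices. -/
def nonnegFormCone (n : Type*) [Fintype n] : ProperCone ℝ (Matrix n n ℝ) where
  carrier := {X | ∀ v, 0 ≤ v ⬝ᵥ X *ᵥ v}
  add_mem' hX hY v := by
    rw [add_mulVec, dotProduct_add]
    exact add_nonneg (hX v) (hY v)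
  zero_mem' v := by simp
  smul_mem' c X hX v := by
    rw [smul_mulVec, dotProduct_smul]
    exact smul_nonneg c.2 (hX v)
  isClosed' := by
    simp only [Set.ofPred_forall]
    refine isClosed_iInter fun v => isClosed_le continuous_const ?_
    fun_prop

theorem mem_nonnegFormCone {X : Matrix n n ℝ} :
    X ∈ nonnegFormCone n ↔ ∀ v, 0 ≤ v ⬝ᵥ X *ᵥ v := Iff.rfl

/-- The quadratic form of `Y` dominates the bilinear form of `Z`. This replaces the two-sided bound
`-Y ≤ Z ≤ Y` in a way that also controls the skew-symmetric part of `Z`. -/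
def FormDominates (Y Z : Matrix n n ℝ) : Prop :=
  ∀ x y, |x ⬝ᵥ Z *ᵥ y| ≤ x ⬝ᵥ Y *ᵥ x + y ⬝ᵥ Y *ᵥ y

theorem formDominates_zero_right_iff {Y : Matrix n n ℝ} :
    FormDominates Y 0 ↔ Y ∈ nonnegFormCone n := by
  rw [mem_nonnegFormCone]
  refine ⟨fun h v => by simpa using h v 0, fun h x y => ?_⟩
  simpa using add_nonneg (h x) (h y)

namespace FormDominates

variable {Y Y' Z Z' : Matrix n n ℝ}

theorem add (h : FormDominates Y Z) (h' : FormDominates Y' Z') :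
    FormDominates (Y + Y') (Z + Z') := fun x y => by
  simp only [add_mulVec, dotProduct_add]
  linarith [abs_add_le (x ⬝ᵥ Z *ᵥ y) (x ⬝ᵥ Z' *ᵥ y), h x y, h' x y]

theorem smul {c : ℝ} (hc : 0 ≤ c) (h : FormDominates Y Z) : FormDominates (c • Y) (c • Z) :=
  fun x y => by
    simp only [smul_mulVec, dotProduct_smul, smul_eq_mul, abs_mul, abs_of_nonneg hc, ← mul_add]
    exact mul_le_mul_of_nonneg_left (h x y) hc

theorem sum {ι : Type*} {s : Finset ι} {Y Z : ι → Matrix n n ℝ}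
    (h : ∀ i, FormDominates (Y i) (Z i)) :
    FormDominates (∑ i ∈ s, Y i) (∑ i ∈ s, Z i) :=
  Finset.sum_hom_rel (formDominates_zero_right_iff.2 (zero_mem _)) fun i _ _ => (h i).add

theorem mono_left (h : FormDominates Y Z) (hY : Y' - Y ∈ nonnegFormCone n) :
    FormDominates Y' Z := by
  simpa using h.add (formDominates_zero_right_iff.2 hY)

theorem mul_mul_transpose {m : Type*} [Fintype m] (h : FormDominates Y Z) (M : Matrix m n ℝ) :
    FormDominates (M * Y * Mᵀ) (M * Z * Mᵀ) := fun x y => by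
  have hform : ∀ (X : Matrix n n ℝ) (x y : m → ℝ),
      x ⬝ᵥ (M * X * Mᵀ) *ᵥ y = (Mᵀ *ᵥ x) ⬝ᵥ X *ᵥ (Mᵀ *ᵥ y) := fun X x y => by
    rw [← mulVec_mulVec, ← mulVec_mulVec, dotProduct_mulVec, ← mulVec_transpose]
  simpa only [hform] using h (Mᵀ *ᵥ x) (Mᵀ *ᵥ y)

theorem abs_apply_le (h : FormDominates Y Z) (i j : n) :
    |Z i j| ≤ Y i i + Y j j := by
  classical
  simpa using h (Pi.single i 1) (Pi.single j 1)

end FormDominates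

section L2OpNorm

open scoped Matrix.Norms.L2Operator

theorem formDominates_norm_smul_one [DecidableEq n] (Z : Matrix n n ℝ) :
    FormDominates (‖Z‖ • 1) Z := fun x y => by
  have hsq : ∀ v : n → ℝ, v ⬝ᵥ v = ‖WithLp.toLp 2 v‖ ^ 2 := fun v => by
    simp only [EuclideanSpace.real_norm_sq_eq, dotProduct, ← sq]
  have hbound : |x ⬝ᵥ Z *ᵥ y| ≤ ‖WithLp.toLp 2 x‖ * (‖Z‖ * ‖WithLp.toLp 2 y‖) := by
    have hinner : x ⬝ᵥ Z *ᵥ y = inner ℝ (WithLp.toLp 2 x) (WithLp.toLp 2 (Z *ᵥ y)) := by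
      simp [EuclideanSpace.inner_toLp_toLp, dotProduct_comm]
    rw [hinner]
    exact (abs_real_inner_le_norm _ _).trans
      (mul_le_mul_of_nonneg_left (Z.l2_opNorm_mulVec (WithLp.toLp 2 y)) (norm_nonneg _))
  simp only [smul_mulVec, one_mulVec, dotProduct_smul, smul_eq_mul, hsq]
  have hmul : ‖WithLp.toLp 2 x‖ * ‖WithLp.toLp 2 y‖ ≤
      ‖WithLp.toLp 2 x‖ ^ 2 + ‖WithLp.toLp 2 y‖ ^ 2 := by
    nlinarith [two_mul_le_add_sq ‖WithLp.toLp 2 x‖ ‖WithLp.toLp 2 y‖]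
  calc |x ⬝ᵥ Z *ᵥ y| ≤ ‖Z‖ * (‖WithLp.toLp 2 x‖ * ‖WithLp.toLp 2 y‖) := by linarith
    _ ≤ ‖Z‖ * (‖WithLp.toLp 2 x‖ ^ 2 + ‖WithLp.toLp 2 y‖ ^ 2) := by gcongr
    _ = _ := mul_add _ _ _

theorem one_mem_interior_nonnegFormCone [DecidableEq n] :
    (1 : Matrix n n ℝ) ∈ interior (nonnegFormCone n : Set (Matrix n n ℝ)) := by
  refine mem_interior.2 ⟨Metric.ball 1 (1 / 2), fun Y hY v => ?_, Metric.isOpen_ball, by simp⟩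
  have hdom := (abs_le.1 (formDominates_norm_smul_one (Y - 1) v v)).1
  have hnorm : ‖Y - 1‖ < 1 / 2 := mem_ball_iff_norm.1 hY
  have hvv : 0 ≤ v ⬝ᵥ v := by simpa using dotProduct_star_self_nonneg v
  simp only [sub_mulVec, one_mulVec, dotProduct_sub, smul_mulVec, dotProduct_smul,
    smul_eq_mul] at hdom
  nlinarith

theorem exists_formDominates_smul {X : Matrix n n ℝ}
    (hX : X ∈ interior (nonnegFormCone n : Set (Matrix n n ℝ))) (Z : Matrix n n ℝ) :
    ∃ c : ℝ, 0 ≤ c ∧ FormDominates (c • X) Z := by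
  classical
  obtain ⟨ε, hε, hε0⟩ := ((eventually_sub_smul_mem_properCone hX 1).and self_mem_nhdsWithin).exists
  have hc : 0 ≤ ‖Z‖ / ε := div_nonneg (norm_nonneg Z) (le_of_lt hε0)
  refine ⟨‖Z‖ / ε, hc, (formDominates_norm_smul_one Z).mono_left ?_⟩
  have := (nonnegFormCone n).smul_mem hε hc
  rwa [smul_sub, smul_smul, div_mul_cancel₀ _ (ne_of_gt hε0)] at this

theorem exists_mem_interior_nonnegFormCone_smul_sub_map_mem {T : Module.End ℝ (Matrix n n ℝ)}
    (hT : ∀ X ∈ nonnegFormCone n, T X ∈ nonnegFormCone n) (hr : spectralRadius ℝ T < 1) :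
    ∃ X ∈ interior (nonnegFormCone n : Set (Matrix n n ℝ)), ∃ r ∈ Set.Ico (0 : ℝ) 1,
      r • X - T X ∈ nonnegFormCone n := by
  classical
  have hr' : spectralRadius ℝ (Module.End.toContinuousLinearMap (Matrix n n ℝ) T) < 1 := by
    rwa [spectralRadius, AlgEquiv.spectrum_eq]
  exact exists_mem_interior_smul_sub_map_mem (T := Module.End.toContinuousLinearMap _ T) hT hr'
    ⟨1, one_mem_interior_nonnegFormCone⟩

end L2OpNorm

theorem FormDominates.pow_apply {T : Module.End ℝ (Matrix n n ℝ)}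
    (hT : ∀ Y Z, FormDominates Y Z → FormDominates (T Y) (T Z))
    {X Z : Matrix n n ℝ} {c r : ℝ} (h : FormDominates (c • X) Z)
    (hc : 0 ≤ c) (hr : 0 ≤ r) (hX : r • X - T X ∈ nonnegFormCone n) (k : ℕ) :
    FormDominates ((c * r ^ k) • X) ((T ^ k) Z) := by
  induction k with
  | zero => simpa using h
  | succ k ih =>
    rw [pow_succ' T, Module.End.mul_apply]
    refine (hT _ _ ih).mono_left ?_
    have heq : (c * r ^ (k + 1)) • X - T ((c * r ^ k) • X) = (c * r ^ k) • (r • X - T X) := by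
      rw [map_smul, smul_sub, smul_smul, pow_succ, mul_assoc]
    rw [heq]
    exact (nonnegFormCone n).smul_mem hX (by positivity)

theorem tendsto_pow_apply_zero_of_preserves_formDominates {T : Module.End ℝ (Matrix n n ℝ)}
    (hT : ∀ Y Z, FormDominates Y Z → FormDominates (T Y) (T Z)) (hr : spectralRadius ℝ T < 1)
    (Z : Matrix n n ℝ) : Tendsto (fun k => (T ^ k) Z) atTop (𝓝 0) := by
  have hpos : ∀ X ∈ nonnegFormCone n, T X ∈ nonnegFormCone n := fun X hX => by
    simpa only [map_zero, formDominates_zero_right_iff] using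
      hT X 0 (formDominates_zero_right_iff.2 hX)
  obtain ⟨X, hX, r, ⟨hr0, hr1⟩, hsub⟩ :=
    exists_mem_interior_nonnegFormCone_smul_sub_map_mem hpos hr
  obtain ⟨c, hc, hZ⟩ := exists_formDominates_smul hX Z
  refine tendsto_pi_nhds.2 fun i => tendsto_pi_nhds.2 fun j => ?_
  refine squeeze_zero_norm (a := fun k => c * r ^ k * (X i i + X j j)) (fun k => ?_) ?_
  · simpa [mul_add] using (hZ.pow_apply hT hc hr0 hsub k).abs_apply_le i j
  · simpa using ((tendsto_pow_atTop_nhds_zero_of_lt_one hr0 hr1).const_mul c).mul_const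
      (X i i + X j j)

end QuadraticForm

theorem tendsto_of_affine_recursion {R E : Type*} [Semiring R] [AddCommGroup E] [Module R E]
    [TopologicalSpace E] [ContinuousAdd E] {T : Module.End R E}
    (hT : ∀ x, Tendsto (fun k => (T ^ k) x) atTop (𝓝 0)) {d x : E} (hx : T x + d = x)
    {u : ℕ → E} (hu : ∀ k, u (k + 1) = T (u k) + d) : Tendsto u atTop (𝓝 x) := by
  have hpow : ∀ k, (T ^ k) (u 0 - x) + x = u k := fun k => by
    induction k with
    | zero => simp
    | succ k ih =>
      have hstep : T ((T ^ k) (u 0 - x)) = T (u k) - T x := by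
        rw [← map_sub, eq_sub_of_add_eq ih]
      rw [pow_succ', Module.End.mul_apply, hstep, hu, ← sub_eq_of_eq_add' hx.symm]
      abel
  simpa only [hpow, zero_add] using (hT (u 0 - x)).add_const x

section ClosedLoop

variable {n m p q : ℕ}
  (A : Matrix (Fin n) (Fin n) ℝ) (A' : Fin p → Matrix (Fin n) (Fin n) ℝ)
  (B : Matrix (Fin n) (Fin m) ℝ) (B' : Fin q → Matrix (Fin n) (Fin m) ℝ)
  (al : Fin p → ℝ) (be : Fin q → ℝ) (L : Matrix (Fin m) (Fin n) ℝ)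

theorem sandwich_apply (M X : Matrix (Fin n) (Fin n) ℝ) : sandwich M X = M * X * Mᵀ := by
  simp [sandwich, Matrix.mul_assoc]

theorem FormDominates.calT_apply (hal : ∀ i, 0 ≤ al i) (hbe : ∀ j, 0 ≤ be j)
    {Y Z : Matrix (Fin n) (Fin n) ℝ} (h : FormDominates Y Z) :
    FormDominates (calT A A' B B' al be L Y) (calT A A' B B' al be L Z) := by
  simp only [calT, LinearMap.add_apply, LinearMap.sum_apply, LinearMap.smul_apply,
    sandwich_apply]
  exact ((h.mul_mul_transpose _).add
    (.sum fun i => (h.mul_mul_transpose (A' i)).smul (hal i))).add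
    (.sum fun j => (h.mul_mul_transpose (B' j * L)).smul (hbe j))

theorem trace_sandwich_transpose_mul (M P X : Matrix (Fin n) (Fin n) ℝ) :
    (sandwich Mᵀ P * X).trace = (P * sandwich M X).trace := by
  rw [sandwich_apply, sandwich_apply, transpose_transpose, Matrix.mul_assoc, Matrix.mul_assoc,
    trace_mul_comm]
  simp only [Matrix.mul_assoc]

theorem trace_calTstar_mul (P X : Matrix (Fin n) (Fin n) ℝ) :
    (calTstar A A' B B' al be L P * X).trace = (P * calT A A' B B' al be L X).trace := by
  simp only [calT, calTstar, LinearMap.add_apply, LinearMap.sum_apply, LinearMap.smul_apply,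
    Matrix.add_mul, Matrix.mul_add, Matrix.sum_mul, Matrix.mul_sum, Matrix.smul_mul,
    Matrix.mul_smul, trace_add, trace_sum, trace_smul, trace_sandwich_transpose_mul]

end ClosedLoop

theorem stmt3_general {n m p q : ℕ}
    (A : Matrix (Fin n) (Fin n) ℝ) (A' : Fin p → Matrix (Fin n) (Fin n) ℝ)
    (B : Matrix (Fin n) (Fin m) ℝ) (B' : Fin q → Matrix (Fin n) (Fin m) ℝ)
    (al : Fin p → ℝ) (be : Fin q → ℝ) (hal : ∀ i, 0 ≤ al i) (hbe : ∀ j, 0 ≤ be j)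
    (W D : Matrix (Fin n) (Fin n) ℝ) (L : Matrix (Fin m) (Fin n) ℝ)
    (hadm : Admissible A A' B B' al be L)
    (P : Matrix (Fin n) (Fin n) ℝ) (hP : P = calTstar A A' B B' al be L P + W)
    (S : ℕ → Matrix (Fin n) (Fin n) ℝ) (hrec : ∀ k, S (k + 1) = calT A A' B B' al be L (S k) + D) :
    Tendsto (fun N : ℕ => (N : ℝ)⁻¹ * ∑ k ∈ Finset.range N, (W * S k).trace)
      atTop (𝓝 (P * D).trace) := by
  set T := calT A A' B B' al be L
  obtain ⟨X, hX⟩ : ∃ X, (1 - T) X = D := by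
    have hunit : IsUnit (1 - T) := by
      simpa using isUnit_one_sub_smul_of_spectralRadius_lt_one hadm (norm_one (α := ℝ)).le
    exact ((Module.End.isUnit_iff _).1 hunit).surjective D
  have hS : Tendsto S atTop (𝓝 X) :=
    tendsto_of_affine_recursion
      (tendsto_pow_apply_zero_of_preserves_formDominates
        (fun _ _ h => h.calT_apply A A' B B' al be L hal hbe) hadm)
      (eq_add_of_sub_eq' hX).symm hrec
  have hcost : Tendsto (fun k => (W * S k).trace) atTop (𝓝 (W * X).trace) :=
    ((continuous_const.matrix_mul continuous_id).matrix_trace.tendsto X).comp hS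
  have htrace : (W * X).trace = (P * D).trace := by
    rw [eq_sub_of_add_eq' hP.symm, Matrix.sub_mul, trace_sub, trace_calTstar_mul, ← trace_sub,
      ← Matrix.mul_sub, ← hX]
    rfl
  exact htrace ▸ hcost.cesaro

theorem stmt3 {n m p q : ℕ} (hn : 0 < n) (hm : 0 < m)
    (A : Matrix (Fin n) (Fin n) ℝ) (A' : Fin p → Matrix (Fin n) (Fin n) ℝ)
    (B : Matrix (Fin n) (Fin m) ℝ) (B' : Fin q → Matrix (Fin n) (Fin m) ℝ)
    (al : Fin p → ℝ) (be : Fin q → ℝ) (hal : ∀ i, 0 ≤ al i) (hbe : ∀ j, 0 ≤ be j)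
    (Q : Matrix (Fin n) (Fin n) ℝ) (hQ : Q.PosSemidef)
    (R : Matrix (Fin m) (Fin m) ℝ) (hR : R.PosDef)
    (D : Matrix (Fin n) (Fin n) ℝ) (hD : D.PosDef)
    (L : Matrix (Fin m) (Fin n) ℝ)
    (hadm : Admissible A A' B B' al be L)
    (P : Matrix (Fin n) (Fin n) ℝ)
    (hP : P = calTstar A A' B B' al be L P + Q + Lᵀ * R * L)
    (S : ℕ → Matrix (Fin n) (Fin n) ℝ) (hS0 : (S 0).PosSemidef)
    (hrec : ∀ k, S (k + 1) = calT A A' B B' al be L (S k) + D) :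
    Filter.Tendsto
      (fun N : ℕ => (N : ℝ)⁻¹ * ∑ k ∈ Finset.range N, ((Q + Lᵀ * R * L) * S k).trace)
      Filter.atTop (nhds ((P * D).trace)) :=
  stmt3_general A A' B B' al be hal hbe _ D L hadm P (hP.trans (add_assoc _ _ _)) S hrec
end

section
/- Let L_0 ∈ ℝ^{m×n} be an admissible gain, let P_0 be the solution of the stochastic Lyapunov equation for L_0, and define the improved gain L_1 = −(R + Bᵀ P_0 B + Σ_{j=1}^q β̄_j B_jᵀ P_0 B_j)^{-1} Bᵀ P_0 A. Then L_1 is admissible, and the solution P_1 of the stochastic Lyapunov equation for L_1 satisfies P_1 ≤ P_0 in the Loewner order. Moreover, if P* is a symmetric positive semidefinite solution of the stochastic algebraic Riccati equation, then P* ≤ P_1 ≤ P_0. -/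
open Matrix Filter Topology

/-!
For a map `Φ = ∑ᵢ Mᵢᵀ · Mᵢ` preserving the positive semidefinite cone, `ρ(Φ) < 1` holds if and only
if some `E ≥ 0` satisfies `Φ E ≤ E - 1`. Such an `E` yields a comparison principle: a symmetric `D`
with `Φ D ≤ D` satisfies `D ≥ -c rᵏ E` for all `k` and some `r < 1`, hence `D ≥ 0`.

*Existence of `E`.* The `t ∈ [0, 1]` for which `t Φ` has such a matrix form a set containing `0`; it
is open by perturbation, and closed because the comparison principle for nearby `s` makes the
solution of `Y - t Φ Y = 1` positive semidefinite.

*Spectral bound.* An eigenvector `V` for `|μ| ≥ 1` need not be symmetric, so pass to block matrices: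
the family `diag(Mᵢ, μ⁻¹ Mᵢ)` fixes the symmetric matrix with off-diagonal blocks `V`, `Vᵀ`, while
`diag(E, E)` keeps the strict inequality. The comparison principle then forces `V = 0`.

*Policy improvement.* Completing the square, the Lyapunov operator of a gain exceeds the Riccati
operator by a square that vanishes at the improved gain `g`. So `P₀` decreases under the closed loop
of `g` by at least `(g - L₀)ᵀ R (g - L₀)`, which by Young's inequality pays for replacing `L₀` by
`g` in the matrix `E` of `L₀`; hence `g` is stabilizing. The three inequalities are instances of the
comparison principle.
-/

section LoewnerOrder

open scoped MatrixOrder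

section Order

variable {n m : Type*}

lemma transpose_eq_of_nonneg {A : Matrix n n ℝ} (hA : 0 ≤ A) : Aᵀ = A :=
  (nonneg_iff_posSemidef.mp hA).isHermitian

variable [Fintype n] [Fintype m]

lemma nonneg_iff_dotProduct_mulVec {A : Matrix n n ℝ} :
    0 ≤ A ↔ Aᵀ = A ∧ ∀ x, 0 ≤ x ⬝ᵥ (A *ᵥ x) := by
  rw [nonneg_iff_posSemidef, posSemidef_iff_dotProduct_mulVec]
  rfl

lemma transpose_mul_mul_nonneg {A : Matrix n n ℝ} (hA : 0 ≤ A) (B : Matrix n m ℝ) :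
    0 ≤ Bᵀ * A * B :=
  ((nonneg_iff_posSemidef.mp hA).conjTranspose_mul_mul_same B).nonneg

lemma transpose_mul_mul_mono {A B : Matrix n n ℝ} (h : A ≤ B) (C : Matrix n m ℝ) :
    Cᵀ * A * C ≤ Cᵀ * B * C := by
  rw [← sub_nonneg, ← Matrix.sub_mul, ← Matrix.mul_sub]
  exact transpose_mul_mul_nonneg (sub_nonneg.mpr h) C

lemma isClosed_setOf_nonneg : IsClosed {A : Matrix n n ℝ | 0 ≤ A} := by
  simp only [nonneg_iff_dotProduct_mulVec, Set.ofPred_and, Set.ofPred_forall]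
  exact (isClosed_eq (by fun_prop) (by fun_prop)).inter
    (isClosed_iInter fun x => isClosed_le continuous_const (by fun_prop))

lemma nonneg_of_tendsto {f : ℕ → Matrix n n ℝ} {A : Matrix n n ℝ}
    (hf : Tendsto f atTop (𝓝 A)) (h : ∀ k, 0 ≤ f k) : 0 ≤ A :=
  isClosed_setOf_nonneg.mem_of_tendsto hf (.of_forall h)

lemma fromBlocks_diagonal_nonneg {A : Matrix n n ℝ} {D : Matrix m m ℝ} (hA : 0 ≤ A)
    (hD : 0 ≤ D) : 0 ≤ fromBlocks A 0 0 D := by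
  rw [nonneg_iff_dotProduct_mulVec] at hA hD ⊢
  refine ⟨by simp [fromBlocks_transpose, hA.1, hD.1], fun x => ?_⟩
  obtain ⟨u, v, rfl⟩ : ∃ u v, x = Sum.elim u v := ⟨_, _, (Sum.elim_comp_inl_inr x).symm⟩
  simpa [fromBlocks_mulVec, sumElim_dotProduct_sumElim] using add_nonneg (hA.2 u) (hD.2 v)

section DecidableEq

variable [DecidableEq n]

lemma exists_le_smul_one {A : Matrix n n ℝ} (hA : Aᵀ = A) : ∃ c : ℝ, 1 ≤ c ∧ A ≤ c • 1 := by
  obtain ⟨b, hb⟩ := (Matrix.finite_real_spectrum (A := A)).bddAbove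
  refine ⟨max b 1, le_max_right b 1, ?_⟩
  rw [← Algebra.algebraMap_eq_smul_one]
  exact le_algebraMap_of_spectrum_le (fun x hx => (hb hx).trans (le_max_left b 1))
    (show IsSelfAdjoint A from hA)

lemma smul_one_le_one {r : ℝ} (hr : r ≤ 1) : r • (1 : Matrix n n ℝ) ≤ 1 := by
  simpa using smul_le_smul_of_nonneg_right hr (zero_le_one (α := Matrix n n ℝ))

lemma eventually_sub_smul_le_one {A : Matrix n n ℝ} (hA : Aᵀ = A) (t : ℝ) :
    ∀ᶠ s in 𝓝 t, (s - t) • A ≤ 1 := by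
  obtain ⟨b, -, hAb⟩ := exists_le_smul_one hA
  obtain ⟨c, -, hAc⟩ := exists_le_smul_one (A := -A) (by rw [transpose_neg, hA])
  have hsb : ∀ᶠ s in 𝓝 t, (s - t) * b < 1 :=
    ContinuousAt.eventually_lt (by fun_prop) continuousAt_const (by simp)
  have hsc : ∀ᶠ s in 𝓝 t, (t - s) * c < 1 :=
    ContinuousAt.eventually_lt (by fun_prop) continuousAt_const (by simp)
  filter_upwards [hsb, hsc] with s hsb hsc
  rcases le_total t s with hs | hs
  · calc (s - t) • A ≤ (s - t) • b • 1 := smul_le_smul_of_nonneg_left hAb (sub_nonneg.mpr hs)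
      _ ≤ 1 := by rw [smul_smul]; exact smul_one_le_one hsb.le
  · calc (s - t) • A = (t - s) • -A := by module
      _ ≤ (t - s) • c • 1 := smul_le_smul_of_nonneg_left hAc (sub_nonneg.mpr hs)
      _ ≤ 1 := by rw [smul_smul]; exact smul_one_le_one hsc.le

lemma exists_smul_one_le_of_posDef {A : Matrix n n ℝ} (hA : A.PosDef) :
    ∃ c : ℝ, 0 < c ∧ c • 1 ≤ A := by
  rcases isEmpty_or_nonempty n with _ | _
  · exact ⟨1, one_pos, (Subsingleton.elim _ _).le⟩
  · obtain ⟨c, hc, h⟩ := (CFC.exists_pos_algebraMap_le_iff hA.isHermitian).mpr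
      fun x hx => hA.isStrictlyPositive.spectrum_pos hx
    exact ⟨c, hc, by rwa [← Algebra.algebraMap_eq_smul_one]⟩

end DecidableEq

lemma exists_le_smul_of_posDef {A S : Matrix n n ℝ} (hA : Aᵀ = A) (hS : S.PosDef) :
    ∃ c : ℝ, 0 ≤ c ∧ A ≤ c • S := by
  classical
  obtain ⟨b, hb, hAb⟩ := exists_le_smul_one hA
  obtain ⟨r, hr, hrS⟩ := exists_smul_one_le_of_posDef hS
  refine ⟨b * r⁻¹, by positivity, ?_⟩
  calc A ≤ b • 1 := hAb
    _ = (b * r⁻¹) • r • 1 := by rw [smul_smul, inv_mul_cancel_right₀ hr.ne']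
    _ ≤ (b * r⁻¹) • S := by gcongr

end Order

section SpectralRadius

lemma isUnit_one_sub_smul_of_spectralRadius_lt_one_s11 {A : Type*} [Ring A] [Algebra ℝ A] {a : A}
    (h : spectralRadius ℝ a < 1) {t : ℝ} (ht : t ∈ Set.Icc (0 : ℝ) 1) : IsUnit (1 - t • a) := by
  rcases ht.1.eq_or_lt with rfl | ht0
  · simp
  have hres : t⁻¹ ∈ resolventSet ℝ a := by
    refine spectrum.mem_resolventSet_of_spectralRadius_lt (h.trans_le ?_)
    have : (1 : ℝ) ≤ ‖t⁻¹‖ := by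
      rw [Real.norm_of_nonneg (by positivity)]
      exact (one_le_inv₀ ht0).mpr ht.2
    exact_mod_cast this
  have h1 : 1 - t • a = Units.mk0 t ht0.ne' • (algebraMap ℝ A t⁻¹ - a) := by
    rw [Units.smul_mk0, smul_sub, Algebra.algebraMap_eq_smul_one, smul_inv_smul₀ ht0.ne']
  rw [h1]
  exact (spectrum.mem_resolventSet_iff.mp hres).smul _

lemma spectralRadius_lt_one_of_forall_norm_lt {𝕜 V : Type*} [NormedField 𝕜] [AddCommGroup V]
    [Module 𝕜 V] [FiniteDimensional 𝕜 V] {f : Module.End 𝕜 V} (h : ∀ μ ∈ spectrum 𝕜 f, ‖μ‖ < 1) :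
    spectralRadius 𝕜 f < 1 := by
  have hfin := Module.End.finite_spectrum f
  have hsup : spectralRadius 𝕜 f = hfin.toFinset.sup (fun μ => (‖μ‖₊ : ENNReal)) := by
    simp [spectralRadius, Finset.sup_eq_iSup]
  rw [hsup, Finset.sup_lt_iff (by simp)]
  intro μ hμ
  exact_mod_cast h μ (hfin.mem_toFinset.mp hμ)

end SpectralRadius

section MonotoneMap

lemma exists_transpose_eq_sub_map_eq_one {n : Type*} [DecidableEq n]
    {Φ : Module.End ℝ (Matrix n n ℝ)} (hΦt : ∀ X, Φ Xᵀ = (Φ X)ᵀ) (h : IsUnit (1 - Φ)) :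
    ∃ Y, Yᵀ = Y ∧ Y - Φ Y = 1 := by
  have hbij := (Module.End.isUnit_iff _).mp h
  obtain ⟨Y, hY⟩ := hbij.surjective 1
  refine ⟨Y, hbij.injective ?_, hY⟩
  calc (1 - Φ) Yᵀ = ((1 - Φ) Y)ᵀ := by simp [hΦt]
    _ = (1 - Φ) Y := by rw [hY, transpose_one]

variable {n : Type*} [Fintype n] [DecidableEq n] {Φ : Module.End ℝ (Matrix n n ℝ)}

lemma exists_map_le_smul_of_one_le_sub_map {E : Matrix n n ℝ} (hE : 0 ≤ E)
    (hE1 : 1 ≤ E - Φ E) : ∃ r : ℝ, 0 ≤ r ∧ r < 1 ∧ Φ E ≤ r • E := by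
  obtain ⟨c, hc, hEc⟩ := exists_le_smul_one (transpose_eq_of_nonneg hE)
  have hc0 : 0 < c := one_pos.trans_le hc
  refine ⟨1 - c⁻¹, sub_nonneg.mpr (inv_le_one_of_one_le₀ hc), sub_lt_self 1 (inv_pos.mpr hc0), ?_⟩
  have h : c⁻¹ • E ≤ E - Φ E := calc
    c⁻¹ • E ≤ c⁻¹ • c • (1 : Matrix n n ℝ) := by gcongr
    _ = 1 := inv_smul_smul₀ hc0.ne' 1
    _ ≤ E - Φ E := hE1
  rw [sub_smul, one_smul]
  exact le_sub_comm.mp h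

lemma nonneg_of_map_le {D E : Matrix n n ℝ} (hΦ : Monotone Φ) (hE : 0 ≤ E) (hE1 : 1 ≤ E - Φ E)
    (hD : Dᵀ = D) (hD1 : Φ D ≤ D) : 0 ≤ D := by
  obtain ⟨r, hr0, hr1, hEr⟩ := exists_map_le_smul_of_one_le_sub_map hE hE1
  obtain ⟨b, hb, hDb⟩ := exists_le_smul_one (A := -D) (by rw [transpose_neg, hD])
  have hbound (k : ℕ) : 0 ≤ D + (b * r ^ k) • E := by
    induction k with
    | zero =>
      rw [pow_zero, mul_one, ← neg_le_iff_add_nonneg']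
      calc -D ≤ b • 1 := hDb
        _ ≤ b • (E - Φ E) := by gcongr
        _ ≤ b • E := by
          have hΦE : 0 ≤ Φ E := by simpa using hΦ hE
          gcongr
          exact sub_le_self E hΦE
    | succ k ih =>
      calc 0 ≤ Φ (D + (b * r ^ k) • E) := by simpa using hΦ ih
        _ = Φ D + (b * r ^ k) • Φ E := by rw [map_add, map_smul]
        _ ≤ D + (b * r ^ k) • r • E := by gcongr
        _ = D + (b * r ^ (k + 1)) • E := by rw [smul_smul, mul_assoc, ← pow_succ]
  have hlim : Tendsto (fun k : ℕ => D + (b * r ^ k) • E) atTop (𝓝 (D + (b * 0) • E)) :=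
    (((tendsto_pow_atTop_nhds_zero_of_lt_one hr0 hr1).const_mul b).smul_const E).const_add D
  simpa using nonneg_of_tendsto hlim hbound

lemma eq_zero_of_map_eq_self {W E : Matrix n n ℝ} (hΦ : Monotone Φ) (hE : 0 ≤ E)
    (hE1 : 1 ≤ E - Φ E) (hW : Wᵀ = W) (hfix : Φ W = W) : W = 0 :=
  le_antisymm
    (neg_nonneg.mp (nonneg_of_map_le hΦ hE hE1 (by rw [transpose_neg, hW]) (by rw [map_neg, hfix])))
    (nonneg_of_map_le hΦ hE hE1 hW hfix.le)

/-- A Lyapunov matrix for `Φ` is a positive semidefinite `E` with `Φ E ≤ E - 1`. -/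
def HasLyapunovMatrix (Φ : Module.End ℝ (Matrix n n ℝ)) : Prop :=
  ∃ E : Matrix n n ℝ, 0 ≤ E ∧ 1 ≤ E - Φ E

lemma HasLyapunovMatrix.eventually_smul {t : ℝ} (hΦ : Monotone Φ)
    (ht : HasLyapunovMatrix (t • Φ)) : ∀ᶠ s in 𝓝 t, HasLyapunovMatrix (s • Φ) := by
  obtain ⟨E, hE, hE1⟩ := ht
  have hE2 : 0 ≤ (2 : ℝ) • E := by positivity
  have hsmall : ∀ᶠ s in 𝓝 t, (s - t) • Φ ((2 : ℝ) • E) ≤ 1 :=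
    eventually_sub_smul_le_one (transpose_eq_of_nonneg (by simpa using hΦ hE2)) t
  filter_upwards [hsmall] with s hs
  refine ⟨(2 : ℝ) • E, hE2, ?_⟩
  calc (1 : Matrix n n ℝ) = (2 : ℝ) • 1 - 1 := by module
    _ ≤ (2 : ℝ) • (E - (t • Φ) E) - (s - t) • Φ ((2 : ℝ) • E) := by gcongr
    _ = (2 : ℝ) • E - (s • Φ) ((2 : ℝ) • E) := by
      simp only [LinearMap.smul_apply, map_smul]; module

lemma isClosed_setOf_hasLyapunovMatrix_smul (hΦ : Monotone Φ) (hΦt : ∀ X, Φ Xᵀ = (Φ X)ᵀ)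
    (h : ∀ t ∈ Set.Icc (0 : ℝ) 1, IsUnit (1 - t • Φ)) :
    IsClosed ({t | HasLyapunovMatrix (t • Φ)} ∩ Set.Icc (0 : ℝ) 1) := by
  refine isClosed_of_closure_subset fun t ht => ?_
  have htI : t ∈ Set.Icc (0 : ℝ) 1 := isClosed_Icc.closure_subset_iff.mpr Set.inter_subset_right ht
  obtain ⟨Y, hYt, hY⟩ :=
    exists_transpose_eq_sub_map_eq_one (Φ := t • Φ) (by simp [hΦt]) (h t htI)
  have hnear : ∀ᶠ s in 𝓝 t, (s - t) • Φ Y ≤ 1 :=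
    eventually_sub_smul_le_one (by rw [← hΦt, hYt]) t
  obtain ⟨s, ⟨⟨E, hE, hE1⟩, hs0, -⟩, hsY⟩ :=
    ((mem_closure_iff_frequently.mp ht).and_eventually hnear).exists
  have hYs : (s • Φ) Y ≤ Y := sub_nonneg.mp <| calc
    (0 : Matrix n n ℝ) ≤ (Y - (t • Φ) Y) - (s - t) • Φ Y := by rwa [hY, sub_nonneg]
    _ = Y - (s • Φ) Y := by simp only [LinearMap.smul_apply]; module
  exact ⟨⟨Y, nonneg_of_map_le (hΦ.const_smul hs0) hE hE1 hYt hYs, hY.ge⟩, htI⟩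

lemma hasLyapunovMatrix_of_isUnit (hΦ : Monotone Φ) (hΦt : ∀ X, Φ Xᵀ = (Φ X)ᵀ)
    (h : ∀ t ∈ Set.Icc (0 : ℝ) 1, IsUnit (1 - t • Φ)) : HasLyapunovMatrix Φ := by
  have h0 : HasLyapunovMatrix ((0 : ℝ) • Φ) := ⟨1, zero_le_one, by simp⟩
  have hsub := (isClosed_setOf_hasLyapunovMatrix_smul hΦ hΦt h).Icc_subset_of_forall_mem_nhdsWithin
    h0 fun t ht => nhdsWithin_le_nhds (ht.1.eventually_smul hΦ)
  simpa using hsub (Set.right_mem_Icc.mpr zero_le_one)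

end MonotoneMap

section Kraus

variable {ι n m k : Type*} [Fintype ι] [Fintype n]

/-- The completely positive map `X ↦ ∑ i, (M i)ᵀ * X * M i` with Kraus family `M`. For square `M i`
it is the adjoint of the covariance operator `X ↦ ∑ i, M i * X * (M i)ᵀ`. -/
def krausMap (M : ι → Matrix n m ℝ) : Matrix n n ℝ →ₗ[ℝ] Matrix m m ℝ where
  toFun X := ∑ i, (M i)ᵀ * X * M i
  map_add' X Y := by simp only [Matrix.mul_add, Matrix.add_mul, Finset.sum_add_distrib]
  map_smul' c X := by
    simp only [Matrix.mul_smul, Matrix.smul_mul, Finset.smul_sum, RingHom.id_apply]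

/-- The polarization `X ↦ ∑ i, (M i)ᵀ * X * N i` of `krausMap`, which carries the cross terms
between state and input in the quadratic cost. -/
def krausPolar (M : ι → Matrix n m ℝ) (N : ι → Matrix n k ℝ) (X : Matrix n n ℝ) : Matrix m k ℝ :=
  ∑ i, (M i)ᵀ * X * N i

lemma krausMap_eq_krausPolar (M : ι → Matrix n m ℝ) (X : Matrix n n ℝ) :
    krausMap M X = krausPolar M M X := rfl

lemma krausMap_apply (M : ι → Matrix n m ℝ) (X : Matrix n n ℝ) :
    krausMap M X = ∑ i, (M i)ᵀ * X * M i := rfl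

lemma krausPolar_transpose (M : ι → Matrix n m ℝ) (N : ι → Matrix n k ℝ) (X : Matrix n n ℝ) :
    krausPolar M N Xᵀ = (krausPolar N M X)ᵀ := by
  simp only [krausPolar, transpose_sum, transpose_mul, transpose_transpose, Matrix.mul_assoc]

lemma krausMap_transpose (M : ι → Matrix n m ℝ) (X : Matrix n n ℝ) :
    krausMap M Xᵀ = (krausMap M X)ᵀ :=
  krausPolar_transpose M M X

lemma krausMap_mul_right [Fintype m] (G : ι → Matrix n m ℝ) (L : Matrix m k ℝ)
    (X : Matrix n n ℝ) : krausMap (fun i => G i * L) X = Lᵀ * krausMap G X * L := by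
  simp only [krausMap_apply, transpose_mul, Matrix.mul_sum, Matrix.sum_mul, Matrix.mul_assoc]

lemma krausMap_fromBlocks (M : ι → Matrix n m ℝ) (c : ℝ) (W X Y Z : Matrix n n ℝ) :
    krausMap (fun i => fromBlocks (M i) 0 0 (c • M i)) (fromBlocks W X Y Z) =
      fromBlocks (krausMap M W) (c • krausMap M X) (c • krausMap M Y) (c ^ 2 • krausMap M Z) := by
  have hsum (F : Finset ι) (P Q R S : ι → Matrix m m ℝ) :
      ∑ i ∈ F, fromBlocks (P i) (Q i) (R i) (S i) =
        fromBlocks (∑ i ∈ F, P i) (∑ i ∈ F, Q i) (∑ i ∈ F, R i) (∑ i ∈ F, S i) := by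
    induction F using Finset.cons_induction with
    | empty => simp
    | cons i F hi ih => simp only [Finset.sum_cons, ih, fromBlocks_add]
  simp [krausMap_apply, fromBlocks_transpose, fromBlocks_multiply, hsum, Finset.smul_sum,
    sq, smul_smul]

variable [Fintype m]

lemma trace_mul_krausMap (M : ι → Matrix n m ℝ) (X : Matrix n n ℝ) (Y : Matrix m m ℝ) :
    (Y * krausMap M X).trace = (krausMap (fun i => (M i)ᵀ) Y * X).trace := by
  simp only [krausMap_apply, Matrix.mul_sum, Matrix.sum_mul, trace_sum, transpose_transpose]
  exact Finset.sum_congr rfl fun i _ => by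
    rw [Matrix.mul_assoc (M i * Y), Matrix.mul_assoc (M i), trace_mul_comm (M i)]
    simp only [Matrix.mul_assoc]

lemma krausMap_nonneg (M : ι → Matrix n m ℝ) {X : Matrix n n ℝ} (hX : 0 ≤ X) :
    0 ≤ krausMap M X :=
  Finset.sum_nonneg fun i _ => transpose_mul_mul_nonneg hX (M i)

lemma krausMap_monotone (M : ι → Matrix n m ℝ) : Monotone (krausMap M) := fun X Y h => by
  rw [← sub_nonneg, ← map_sub]
  exact krausMap_nonneg M (sub_nonneg.mpr h)

lemma krausMap_add_le (M K : ι → Matrix n m ℝ) {X : Matrix n n ℝ} (hX : 0 ≤ X) {ε : ℝ}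
    (hε : 0 < ε) :
    krausMap (M + K) X ≤ (1 + ε) • krausMap M X + (1 + ε⁻¹) • krausMap K X := by
  have hsq : (1 + ε) • krausMap M X + (1 + ε⁻¹) • krausMap K X - krausMap (M + K) X =
      ε⁻¹ • krausMap (ε • M - K) X := by
    simp only [krausMap_apply, Finset.smul_sum, ← Finset.sum_add_distrib, ← Finset.sum_sub_distrib]
    refine Finset.sum_congr rfl fun i _ => ?_
    simp only [Pi.add_apply, Pi.sub_apply, Pi.smul_apply, transpose_add, transpose_sub,
      transpose_smul, Matrix.add_mul, Matrix.mul_add, Matrix.sub_mul, Matrix.mul_sub,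
      Matrix.smul_mul, Matrix.mul_smul]
    match_scalars <;> field_simp <;> ring
  rw [← sub_nonneg, hsq]
  exact smul_nonneg (inv_nonneg.mpr hε.le) (krausMap_nonneg _ hX)

end Kraus

section Stability

variable {ι n : Type*} [Fintype ι] [Fintype n]

lemma spectrum_krausMap_transpose_subset (M : ι → Matrix n n ℝ) :
    spectrum ℝ (krausMap fun i => (M i)ᵀ) ⊆ spectrum ℝ (krausMap M) := by
  intro μ hμ hμM
  obtain ⟨V, hV⟩ := (Module.End.hasEigenvalue_iff_mem_spectrum.mpr hμ).exists_hasEigenvector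
  have hV' := hV.apply_eq_smul
  have hsurj := ((Module.End.isUnit_iff _).mp hμM).surjective
  refine hV.2 ((Matrix.ext_iff_trace_mul_right).mpr fun X => ?_)
  obtain ⟨Y, rfl⟩ := hsurj X
  simp [Matrix.mul_sub, trace_mul_krausMap, hV', Module.algebraMap_end_apply]

lemma spectrum_krausMap_transpose (M : ι → Matrix n n ℝ) :
    spectrum ℝ (krausMap fun i => (M i)ᵀ) = spectrum ℝ (krausMap M) :=
  (spectrum_krausMap_transpose_subset M).antisymm
    (spectrum_krausMap_transpose_subset fun i => (M i)ᵀ)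

/-- Mean-square stability of the stochastic system `x⁺ = ∑ i, w i • M i *ᵥ x` with uncorrelated
unit-variance weights `w i`. It is phrased with `krausMap M`, the adjoint of the covariance
operator; the two have the same spectrum. -/
def IsMeanSquareStable (M : ι → Matrix n n ℝ) : Prop :=
  spectralRadius ℝ (krausMap M) < 1

lemma isMeanSquareStable_transpose {M : ι → Matrix n n ℝ} :
    IsMeanSquareStable (fun i => (M i)ᵀ) ↔ IsMeanSquareStable M := by
  rw [IsMeanSquareStable, IsMeanSquareStable, spectralRadius, spectralRadius,
    spectrum_krausMap_transpose]

section DecidableEq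

variable [DecidableEq n]

lemma norm_lt_one_of_mem_spectrum_krausMap {M : ι → Matrix n n ℝ}
    (h : HasLyapunovMatrix (krausMap M)) {μ : ℝ} (hμ : μ ∈ spectrum ℝ (krausMap M)) :
    ‖μ‖ < 1 := by
  obtain ⟨E, hE, hE1⟩ := h
  by_contra! hμ1
  have hμ0 : μ ≠ 0 := norm_pos_iff.mp (one_pos.trans_le hμ1)
  obtain ⟨V, hV⟩ := (Module.End.hasEigenvalue_iff_mem_spectrum.mpr hμ).exists_hasEigenvector
  have hΦV : krausMap M V = μ • V := hV.apply_eq_smul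
  let N : ι → Matrix (n ⊕ n) (n ⊕ n) ℝ := fun i => fromBlocks (M i) 0 0 (μ⁻¹ • M i)
  have hfix : krausMap N (fromBlocks 0 V Vᵀ 0) = fromBlocks 0 V Vᵀ 0 := by
    rw [krausMap_fromBlocks, krausMap_transpose, hΦV, transpose_smul, inv_smul_smul₀ hμ0,
      inv_smul_smul₀ hμ0, map_zero, smul_zero]
  have hμE : μ⁻¹ ^ 2 • krausMap M E ≤ krausMap M E := by
    have hμ2 : μ⁻¹ ^ 2 ≤ 1 := by
      rw [sq_le_one_iff_abs_le_one, abs_inv]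
      exact inv_le_one_of_one_le₀ hμ1
    simpa using smul_le_smul_of_nonneg_right hμ2 (krausMap_nonneg M hE)
  have hN : 1 ≤ fromBlocks E 0 0 E - krausMap N (fromBlocks E 0 0 E) := by
    have hblocks : fromBlocks E 0 0 E - krausMap N (fromBlocks E 0 0 E) - 1 =
        fromBlocks (E - krausMap M E - 1) 0 0 (E - μ⁻¹ ^ 2 • krausMap M E - 1) := by
      rw [krausMap_fromBlocks]
      ext (_ | _) (_ | _) <;> simp [Matrix.one_apply]
    rw [← sub_nonneg, hblocks]
    refine fromBlocks_diagonal_nonneg (sub_nonneg.mpr hE1) (sub_nonneg.mpr (hE1.trans ?_))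
    gcongr
  have hW := eq_zero_of_map_eq_self (krausMap_monotone N) (fromBlocks_diagonal_nonneg hE hE) hN
    (by simp [fromBlocks_transpose]) hfix
  rw [← fromBlocks_zero, fromBlocks_inj] at hW
  exact hV.2 hW.2.1

theorem isMeanSquareStable_iff_hasLyapunovMatrix {M : ι → Matrix n n ℝ} :
    IsMeanSquareStable M ↔ HasLyapunovMatrix (krausMap M) :=
  ⟨fun h => hasLyapunovMatrix_of_isUnit (krausMap_monotone M) (krausMap_transpose M)
      fun _ ht => isUnit_one_sub_smul_of_spectralRadius_lt_one_s11 h ht,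
    fun h => spectralRadius_lt_one_of_forall_norm_lt fun _ hμ =>
      norm_lt_one_of_mem_spectrum_krausMap h hμ⟩

end DecidableEq

lemma IsMeanSquareStable.nonneg_of_krausMap_le {M : ι → Matrix n n ℝ} (h : IsMeanSquareStable M)
    {D : Matrix n n ℝ} (hD : krausMap M D ≤ D) : 0 ≤ D := by
  classical
  obtain ⟨E, hE, hE1⟩ := isMeanSquareStable_iff_hasLyapunovMatrix.mp h
  refine nonneg_of_map_le (krausMap_monotone M) hE hE1 ?_ hD
  have hunit : IsUnit (1 - krausMap M) := by
    simpa using isUnit_one_sub_smul_of_spectralRadius_lt_one_s11 h (Set.right_mem_Icc.mpr zero_le_one)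
  apply ((Module.End.isUnit_iff _).mp hunit).injective
  simpa [krausMap_transpose] using transpose_eq_of_nonneg (sub_nonneg.mpr hD)

lemma IsMeanSquareStable.add {M K : ι → Matrix n n ℝ} (h : IsMeanSquareStable M)
    {P : Matrix n n ℝ} (hP : 0 ≤ P)
    (hK : ∀ E, 0 ≤ E → ∃ c : ℝ, 0 ≤ c ∧ krausMap K E ≤ c • (P - krausMap (M + K) P)) :
    IsMeanSquareStable (M + K) := by
  classical
  obtain ⟨E, hE, hE1⟩ := isMeanSquareStable_iff_hasLyapunovMatrix.mp h
  have hE2 : 0 ≤ (2 : ℝ) • E := smul_nonneg zero_le_two hE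
  obtain ⟨b, hb, hEb⟩ := exists_le_smul_one (transpose_eq_of_nonneg (krausMap_nonneg M hE2))
  obtain ⟨c, hc, hKc⟩ := hK _ hE2
  have hb0 : 0 < b := one_pos.trans_le hb
  have hM : b⁻¹ • krausMap M ((2 : ℝ) • E) ≤ 1 := by
    simpa [smul_smul, hb0.ne'] using smul_le_smul_of_nonneg_left hEb (inv_nonneg.mpr hb0.le)
  have hyoung : krausMap (M + K) ((2 : ℝ) • E) ≤
      (1 + b⁻¹) • krausMap M ((2 : ℝ) • E) + (1 + b) • krausMap K ((2 : ℝ) • E) := by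
    simpa using krausMap_add_le M K hE2 (inv_pos.mpr hb0)
  refine isMeanSquareStable_iff_hasLyapunovMatrix.mpr
    ⟨(2 : ℝ) • E + (1 + b) • c • P, by positivity, ?_⟩
  calc (1 : Matrix n n ℝ) = (2 : ℝ) • 1 - 1 := by module
    _ ≤ (2 : ℝ) • (E - krausMap M E) - b⁻¹ • krausMap M ((2 : ℝ) • E) := by gcongr
    _ = (2 : ℝ) • E - ((1 + b⁻¹) • krausMap M ((2 : ℝ) • E) +
          (1 + b) • krausMap K ((2 : ℝ) • E)) + (1 + b) • krausMap K ((2 : ℝ) • E) := by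
      rw [map_smul]; module
    _ ≤ (2 : ℝ) • E - krausMap (M + K) ((2 : ℝ) • E) +
          (1 + b) • c • (P - krausMap (M + K) P) := by gcongr
    _ = (2 : ℝ) • E + (1 + b) • c • P - krausMap (M + K) ((2 : ℝ) • E + (1 + b) • c • P) := by
      simp only [map_add, map_smul]; module

end Stability

section LinearQuadratic

lemma mul_add_mul_add_eq_square_sub {n m : Type*} [Fintype m] [DecidableEq m]
    {S : Matrix m m ℝ} (hS : S.PosDef) (F L : Matrix m n ℝ) :
    Lᵀ * F + Fᵀ * L + Lᵀ * S * L =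
      (-S⁻¹ * F - L)ᵀ * S * (-S⁻¹ * F - L) - Fᵀ * S⁻¹ * F := by
  have hSt : Sᵀ = S := hS.isHermitian
  have hdet : IsUnit S.det := (isUnit_iff_isUnit_det S).mp hS.isUnit
  simp only [Matrix.neg_mul, transpose_sub, transpose_neg, transpose_mul, transpose_nonsing_inv,
    hSt, Matrix.sub_mul, Matrix.mul_sub, Matrix.mul_neg, Matrix.mul_assoc,
    mul_nonsing_inv_cancel_left _ _ hdet, nonsing_inv_mul_cancel_left _ _ hdet]
  abel

/-- The Kraus family of the system with state noise matrices `C` and input noise matrices `G`,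
closed by the feedback `u = L *ᵥ x`. -/
def closedLoop {ι n m : Type*} [Fintype m] (C : ι → Matrix n n ℝ) (G : ι → Matrix n m ℝ)
    (L : Matrix m n ℝ) : ι → Matrix n n ℝ :=
  fun i => C i + G i * L

variable {ι n m : Type*} [Fintype ι] [Fintype n]

/-- The weight `R + ∑ i, (G i)ᵀ * P * G i` of the input in the one-step cost with cost-to-go `P`. -/
def inputWeight (G : ι → Matrix n m ℝ) (R : Matrix m m ℝ) (P : Matrix n n ℝ) : Matrix m m ℝ :=
  R + krausMap G P

variable [Fintype m]

lemma krausMap_closedLoop (C : ι → Matrix n n ℝ) (G : ι → Matrix n m ℝ) (L : Matrix m n ℝ)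
    (P : Matrix n n ℝ) :
    krausMap (closedLoop C G L) P = krausMap C P + Lᵀ * krausPolar G C P +
      krausPolar C G P * L + Lᵀ * krausMap G P * L := by
  simp only [krausMap_apply, closedLoop, krausPolar, Matrix.mul_sum, Matrix.sum_mul,
    ← Finset.sum_add_distrib]
  refine Finset.sum_congr rfl fun i _ => ?_
  simp only [transpose_add, transpose_mul, Matrix.add_mul, Matrix.mul_add, Matrix.mul_assoc]
  abel

/-- The right-hand side of the Lyapunov equation: the cost of one step of feedback `L` with
cost-to-go `P`. -/
def lyapunovOp (C : ι → Matrix n n ℝ) (G : ι → Matrix n m ℝ) (Q : Matrix n n ℝ)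
    (R : Matrix m m ℝ) (L : Matrix m n ℝ) (P : Matrix n n ℝ) : Matrix n n ℝ :=
  krausMap (closedLoop C G L) P + Q + Lᵀ * R * L

lemma inputWeight_posDef (G : ι → Matrix n m ℝ) {R : Matrix m m ℝ} (hR : R.PosDef)
    {P : Matrix n n ℝ} (hP : 0 ≤ P) : (inputWeight G R P).PosDef :=
  hR.add_posSemidef (nonneg_iff_posSemidef.mp (krausMap_nonneg G hP))

section Comparison

variable {C : ι → Matrix n n ℝ} {G : ι → Matrix n m ℝ} {Q : Matrix n n ℝ} {R : Matrix m m ℝ}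
  {L : Matrix m n ℝ} {P X Y : Matrix n n ℝ}

lemma le_of_lyapunovOp_le (hL : IsMeanSquareStable (closedLoop C G L))
    (hX : X ≤ lyapunovOp C G Q R L X) (hY : lyapunovOp C G Q R L Y ≤ Y) : X ≤ Y := by
  refine sub_nonneg.mp (hL.nonneg_of_krausMap_le ?_)
  calc krausMap (closedLoop C G L) (Y - X)
      = lyapunovOp C G Q R L Y - lyapunovOp C G Q R L X := by
        rw [lyapunovOp, lyapunovOp, map_sub]; abel
    _ ≤ Y - X := sub_le_sub hY hX

lemma nonneg_of_eq_lyapunovOp (hQ : 0 ≤ Q) (hR : 0 ≤ R)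
    (hL : IsMeanSquareStable (closedLoop C G L)) (hP : P = lyapunovOp C G Q R L P) : 0 ≤ P := by
  refine le_of_lyapunovOp_le hL ?_ hP.ge
  simpa [lyapunovOp] using add_nonneg hQ (transpose_mul_mul_nonneg hR L)

lemma IsMeanSquareStable.closedLoop_of_le {L' : Matrix m n ℝ}
    (hL : IsMeanSquareStable (closedLoop C G L)) (hR : R.PosDef) (hP : 0 ≤ P)
    (h : (L' - L)ᵀ * R * (L' - L) ≤ P - krausMap (closedLoop C G L') P) :
    IsMeanSquareStable (closedLoop C G L') := by
  set D := L' - L with hD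
  have hsplit : closedLoop C G L' = closedLoop C G L + fun i => G i * D := by
    ext1 i
    rw [Pi.add_apply, closedLoop, closedLoop, add_assoc, ← Matrix.mul_add, hD, add_sub_cancel]
  rw [hsplit] at h ⊢
  refine hL.add hP fun E hE => ?_
  obtain ⟨c, hc, hGR⟩ :=
    exists_le_smul_of_posDef (transpose_eq_of_nonneg (krausMap_nonneg G hE)) hR
  refine ⟨c, hc, ?_⟩
  calc krausMap (fun i => G i * D) E = Dᵀ * krausMap G E * D := krausMap_mul_right G D E
    _ ≤ Dᵀ * (c • R) * D := transpose_mul_mul_mono hGR D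
    _ = c • (Dᵀ * R * D) := by rw [Matrix.mul_smul, Matrix.smul_mul]
    _ ≤ c • (P - krausMap (closedLoop C G L + fun i => G i * D) P) := by gcongr

end Comparison

variable [DecidableEq m]

/-- The policy-improvement gain: the feedback minimizing the one-step cost with cost-to-go `P`.
The inverse is meaningful when `inputWeight G R P` is invertible. -/
noncomputable def greedyGain (C : ι → Matrix n n ℝ) (G : ι → Matrix n m ℝ) (R : Matrix m m ℝ)
    (P : Matrix n n ℝ) : Matrix m n ℝ :=
  -(inputWeight G R P)⁻¹ * krausPolar G C P

/-- The right-hand side of the Riccati equation: the minimal one-step cost with cost-to-go `P`.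
The inverse is meaningful when `inputWeight G R P` is invertible. -/
noncomputable def riccatiOp (C : ι → Matrix n n ℝ) (G : ι → Matrix n m ℝ) (Q : Matrix n n ℝ)
    (R : Matrix m m ℝ) (P : Matrix n n ℝ) : Matrix n n ℝ :=
  Q + krausMap C P - krausPolar C G P * (inputWeight G R P)⁻¹ * krausPolar G C P

variable {C : ι → Matrix n n ℝ} {G : ι → Matrix n m ℝ} {Q : Matrix n n ℝ} {R : Matrix m m ℝ}
  {L : Matrix m n ℝ} {P : Matrix n n ℝ}

lemma lyapunovOp_eq_riccatiOp_add (hR : R.PosDef) (hP : 0 ≤ P) :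
    lyapunovOp C G Q R L P = riccatiOp C G Q R P +
      (greedyGain C G R P - L)ᵀ * inputWeight G R P * (greedyGain C G R P - L) := by
  have hsq := mul_add_mul_add_eq_square_sub (inputWeight_posDef G hR hP) (krausPolar G C P) L
  rw [← krausPolar_transpose, transpose_eq_of_nonneg hP] at hsq
  calc lyapunovOp C G Q R L P
      = Q + krausMap C P + (Lᵀ * krausPolar G C P + krausPolar C G P * L +
          Lᵀ * inputWeight G R P * L) := by
        rw [lyapunovOp, krausMap_closedLoop, inputWeight, Matrix.mul_add, Matrix.add_mul]; abel
    _ = _ := by rw [hsq, riccatiOp, greedyGain]; abel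

lemma lyapunovOp_greedyGain (hR : R.PosDef) (hP : 0 ≤ P) :
    lyapunovOp C G Q R (greedyGain C G R P) P = riccatiOp C G Q R P := by
  simp [lyapunovOp_eq_riccatiOp_add hR hP]

lemma riccatiOp_le_lyapunovOp (hR : R.PosDef) (hP : 0 ≤ P) :
    riccatiOp C G Q R P ≤ lyapunovOp C G Q R L P := by
  rw [lyapunovOp_eq_riccatiOp_add hR hP]
  exact le_add_of_nonneg_right
    (transpose_mul_mul_nonneg (inputWeight_posDef G hR hP).posSemidef.nonneg _)

lemma greedyGain_sub_le (hQ : 0 ≤ Q) (hR : R.PosDef) (hP : 0 ≤ P)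
    (hPL : P = lyapunovOp C G Q R L P) :
    (greedyGain C G R P - L)ᵀ * R * (greedyGain C G R P - L) ≤
      P - krausMap (closedLoop C G (greedyGain C G R P)) P := by
  set g := greedyGain C G R P
  calc (g - L)ᵀ * R * (g - L) ≤ (g - L)ᵀ * inputWeight G R P * (g - L) :=
        transpose_mul_mul_mono (le_add_of_nonneg_right (krausMap_nonneg G hP)) _
    _ = lyapunovOp C G Q R L P - riccatiOp C G Q R P := by
        rw [lyapunovOp_eq_riccatiOp_add hR hP, add_sub_cancel_left]
    _ = P - (krausMap (closedLoop C G g) P + (Q + gᵀ * R * g)) := by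
        rw [← hPL, ← lyapunovOp_greedyGain hR hP, lyapunovOp, add_assoc]
    _ ≤ P - krausMap (closedLoop C G g) P := by
        gcongr
        exact le_add_of_nonneg_right
          (add_nonneg hQ (transpose_mul_mul_nonneg hR.posSemidef.nonneg g))

lemma isMeanSquareStable_greedyGain (hQ : 0 ≤ Q) (hR : R.PosDef)
    (hL : IsMeanSquareStable (closedLoop C G L)) (hP : P = lyapunovOp C G Q R L P) :
    IsMeanSquareStable (closedLoop C G (greedyGain C G R P)) :=
  have hP0 := nonneg_of_eq_lyapunovOp hQ hR.posSemidef.nonneg hL hP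
  hL.closedLoop_of_le hR hP0 (greedyGain_sub_le hQ hR hP0 hP)

end LinearQuadratic

theorem stmt11_general {ι n m : Type*} [Fintype ι] [Fintype n] [Fintype m] [DecidableEq m]
    {C : ι → Matrix n n ℝ} {G : ι → Matrix n m ℝ} {Q : Matrix n n ℝ} {R : Matrix m m ℝ}
    {L : Matrix m n ℝ} {P : Matrix n n ℝ} (hQ : 0 ≤ Q) (hR : R.PosDef)
    (hL : IsMeanSquareStable (closedLoop C G L)) (hP : P = lyapunovOp C G Q R L P) :
    IsMeanSquareStable (closedLoop C G (greedyGain C G R P)) ∧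
    ∀ P₁, P₁ = lyapunovOp C G Q R (greedyGain C G R P) P₁ →
      P₁ ≤ P ∧ ∀ Pstar, 0 ≤ Pstar → Pstar = riccatiOp C G Q R Pstar →
        Pstar ≤ P₁ ∧ Pstar ≤ P := by
  have hP0 := nonneg_of_eq_lyapunovOp hQ hR.posSemidef.nonneg hL hP
  have hg := isMeanSquareStable_greedyGain hQ hR hL hP
  refine ⟨hg, fun P₁ hP₁ => ?_⟩
  have hle : P₁ ≤ P := le_of_lyapunovOp_le hg hP₁.le <| calc
    lyapunovOp C G Q R (greedyGain C G R P) P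
        = riccatiOp C G Q R P := lyapunovOp_greedyGain hR hP0
    _ ≤ lyapunovOp C G Q R L P := riccatiOp_le_lyapunovOp hR hP0
    _ = P := hP.symm
  refine ⟨hle, fun Pstar hPs0 hPs => ?_⟩
  have hPs1 : Pstar ≤ P₁ :=
    le_of_lyapunovOp_le hg (hPs.trans_le (riccatiOp_le_lyapunovOp hR hPs0)) hP₁.ge
  exact ⟨hPs1, hPs1.trans hle⟩

section NoiseFamily

variable {ι κ n m k : Type*} {a : ι → ℝ} {b : κ → ℝ}

/-- The Kraus family of one deterministic matrix `A` together with two blocks of noise matrices;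
noise matrices of variance `v` are scaled by `√v`. -/
noncomputable def noiseFamily (A : Matrix n m ℝ) (A' : ι → Matrix n m ℝ) (A'' : κ → Matrix n m ℝ)
    (a : ι → ℝ) (b : κ → ℝ) : Unit ⊕ ι ⊕ κ → Matrix n m ℝ :=
  Sum.elim (fun _ => A) (Sum.elim (fun i => √(a i) • A' i) fun j => √(b j) • A'' j)

lemma noiseFamily_transpose (A : Matrix n m ℝ) (A' : ι → Matrix n m ℝ) (A'' : κ → Matrix n m ℝ) :
    (fun i => (noiseFamily A A' A'' a b i)ᵀ) =
      noiseFamily Aᵀ (fun i => (A' i)ᵀ) (fun j => (A'' j)ᵀ) a b := by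
  ext1 (_ | _ | _) <;> simp [noiseFamily]

lemma closedLoop_noiseFamily [Fintype m] (A : Matrix n n ℝ) (A' : ι → Matrix n n ℝ)
    (B : Matrix n m ℝ) (B' : κ → Matrix n m ℝ) (L : Matrix m n ℝ) :
    closedLoop (noiseFamily A A' 0 a b) (noiseFamily B 0 B' a b) L =
      noiseFamily (A + B * L) A' (fun j => B' j * L) a b := by
  ext1 (_ | _ | _) <;> simp [closedLoop, noiseFamily]

variable [Fintype ι] [Fintype κ] [Fintype n]

lemma krausPolar_noiseFamily (ha : ∀ i, 0 ≤ a i) (hb : ∀ j, 0 ≤ b j)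
    (A : Matrix n m ℝ) (A' : ι → Matrix n m ℝ) (A'' : κ → Matrix n m ℝ)
    (B : Matrix n k ℝ) (B' : ι → Matrix n k ℝ) (B'' : κ → Matrix n k ℝ) (X : Matrix n n ℝ) :
    krausPolar (noiseFamily A A' A'' a b) (noiseFamily B B' B'' a b) X =
      Aᵀ * X * B + ∑ i, a i • ((A' i)ᵀ * X * B' i) + ∑ j, b j • ((A'' j)ᵀ * X * B'' j) := by
  simp [krausPolar, noiseFamily, smul_smul, Real.mul_self_sqrt, ha, hb, add_assoc]

lemma inputWeight_noiseFamily (ha : ∀ i, 0 ≤ a i) (hb : ∀ j, 0 ≤ b j) (B : Matrix n m ℝ)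
    (B' : κ → Matrix n m ℝ) (R : Matrix m m ℝ) (P : Matrix n n ℝ) :
    inputWeight (noiseFamily B 0 B' a b) R P =
      R + Bᵀ * P * B + ∑ j, b j • ((B' j)ᵀ * P * B' j) := by
  simp [inputWeight, krausMap_eq_krausPolar, krausPolar_noiseFamily ha hb, add_assoc]

variable [Fintype m] [DecidableEq m]

lemma greedyGain_noiseFamily (ha : ∀ i, 0 ≤ a i) (hb : ∀ j, 0 ≤ b j) (A : Matrix n n ℝ)
    (A' : ι → Matrix n n ℝ) (B : Matrix n m ℝ) (B' : κ → Matrix n m ℝ) (R : Matrix m m ℝ)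
    (P : Matrix n n ℝ) :
    greedyGain (noiseFamily A A' 0 a b) (noiseFamily B 0 B' a b) R P =
      -(R + Bᵀ * P * B + ∑ j, b j • ((B' j)ᵀ * P * B' j))⁻¹ * (Bᵀ * P * A) := by
  simp [greedyGain, inputWeight_noiseFamily ha hb, krausPolar_noiseFamily ha hb]

lemma riccatiOp_noiseFamily (ha : ∀ i, 0 ≤ a i) (hb : ∀ j, 0 ≤ b j) (A : Matrix n n ℝ)
    (A' : ι → Matrix n n ℝ) (B : Matrix n m ℝ) (B' : κ → Matrix n m ℝ) (Q : Matrix n n ℝ)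
    (R : Matrix m m ℝ) (P : Matrix n n ℝ) :
    riccatiOp (noiseFamily A A' 0 a b) (noiseFamily B 0 B' a b) Q R P =
      Q + Aᵀ * P * A + ∑ i, a i • ((A' i)ᵀ * P * A' i) -
        Aᵀ * P * B * (R + Bᵀ * P * B + ∑ j, b j • ((B' j)ᵀ * P * B' j))⁻¹ * (Bᵀ * P * A) := by
  simp [riccatiOp, inputWeight_noiseFamily ha hb, krausMap_eq_krausPolar,
    krausPolar_noiseFamily ha hb, add_assoc]

end NoiseFamily

end LoewnerOrder

section Admissible

variable {n m p q : ℕ} {A : Matrix (Fin n) (Fin n) ℝ} {A' : Fin p → Matrix (Fin n) (Fin n) ℝ}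
  {B : Matrix (Fin n) (Fin m) ℝ} {B' : Fin q → Matrix (Fin n) (Fin m) ℝ}
  {al : Fin p → ℝ} {be : Fin q → ℝ}

lemma calT_eq_krausMap (hal : ∀ i, 0 ≤ al i) (hbe : ∀ j, 0 ≤ be j)
    (L : Matrix (Fin m) (Fin n) ℝ) :
    calT A A' B B' al be L =
      krausMap fun i =>
        (closedLoop (noiseFamily A A' 0 al be) (noiseFamily B 0 B' al be) L i)ᵀ := by
  ext1 X
  rw [closedLoop_noiseFamily, noiseFamily_transpose, krausMap_eq_krausPolar,
    krausPolar_noiseFamily hal hbe]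
  simp [calT, sandwich, Matrix.mul_assoc]

lemma calTstar_eq_krausMap (hal : ∀ i, 0 ≤ al i) (hbe : ∀ j, 0 ≤ be j)
    (L : Matrix (Fin m) (Fin n) ℝ) :
    calTstar A A' B B' al be L =
      krausMap (closedLoop (noiseFamily A A' 0 al be) (noiseFamily B 0 B' al be) L) := by
  ext1 X
  rw [closedLoop_noiseFamily, krausMap_eq_krausPolar, krausPolar_noiseFamily hal hbe]
  simp [calTstar, sandwich, Matrix.mul_assoc]

lemma admissible_iff_isMeanSquareStable (hal : ∀ i, 0 ≤ al i) (hbe : ∀ j, 0 ≤ be j)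
    {L : Matrix (Fin m) (Fin n) ℝ} :
    Admissible A A' B B' al be L ↔
      IsMeanSquareStable
        (closedLoop (noiseFamily A A' 0 al be) (noiseFamily B 0 B' al be) L) := by
  rw [Admissible, calT_eq_krausMap hal hbe, ← IsMeanSquareStable, isMeanSquareStable_transpose]

end Admissible

theorem stmt11 {n m p q : ℕ} (hn : 0 < n) (hm : 0 < m)
    (A : Matrix (Fin n) (Fin n) ℝ) (A' : Fin p → Matrix (Fin n) (Fin n) ℝ)
    (B : Matrix (Fin n) (Fin m) ℝ) (B' : Fin q → Matrix (Fin n) (Fin m) ℝ)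
    (al : Fin p → ℝ) (be : Fin q → ℝ) (hal : ∀ i, 0 ≤ al i) (hbe : ∀ j, 0 ≤ be j)
    (Q : Matrix (Fin n) (Fin n) ℝ) (hQ : Q.PosSemidef)
    (R : Matrix (Fin m) (Fin m) ℝ) (hR : R.PosDef)
    (L0 : Matrix (Fin m) (Fin n) ℝ) (hadm0 : Admissible A A' B B' al be L0)
    (P0 : Matrix (Fin n) (Fin n) ℝ)
    (hP0 : P0 = calTstar A A' B B' al be L0 P0 + Q + L0ᵀ * R * L0)
    (L1 : Matrix (Fin m) (Fin n) ℝ)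
    (hL1 : L1 = -(R + Bᵀ * P0 * B + ∑ j, be j • ((B' j)ᵀ * P0 * B' j))⁻¹ * (Bᵀ * P0 * A)) :
    Admissible A A' B B' al be L1 ∧
    ∀ P1 : Matrix (Fin n) (Fin n) ℝ,
      P1 = calTstar A A' B B' al be L1 P1 + Q + L1ᵀ * R * L1 →
      (P0 - P1).PosSemidef ∧
      ∀ Pstar : Matrix (Fin n) (Fin n) ℝ, Pstar.PosSemidef →
        Pstar = Q + Aᵀ * Pstar * A + (∑ i, al i • ((A' i)ᵀ * Pstar * A' i)) -
          Aᵀ * Pstar * B *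
            (R + Bᵀ * Pstar * B + ∑ j, be j • ((B' j)ᵀ * Pstar * B' j))⁻¹ *
            (Bᵀ * Pstar * A) →
        (P1 - Pstar).PosSemidef ∧ (P0 - Pstar).PosSemidef := by
  subst hL1
  simp only [admissible_iff_isMeanSquareStable hal hbe, calTstar_eq_krausMap hal hbe,
    ← greedyGain_noiseFamily (A' := A') hal hbe, ← riccatiOp_noiseFamily hal hbe]
    at hadm0 hP0 ⊢
  obtain ⟨hg, h⟩ := stmt11_general hQ.nonneg hR hadm0 hP0
  exact ⟨hg, fun P1 hP1 => (h P1 hP1).imp_right fun h Pstar hPs => h Pstar hPs.nonneg⟩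
end
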